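/- Let B be an A-comodule algebra with invariants C = B^A. Assume C is noetherian, B is finite and flat as a C-module, and A is finitely generated and projective (finite locally free) as an R-module. Then the following are equivalent: (1) there exists a total integral α : A → B (the action is tame); (2) the functor of invariants on (B,A)-modules is exact, i.e., for every surjective morphism f : M → N of (B,A)-modules the induced map M^A → N^A on invariants is surjective. -/

import Mathlib

open TensorProduct

section ComodDefs

variable (R A : Type*) [CommRing R] [CommRing A] [HopfAlgebra R A]

/-- `ρ : M →ₗ[R] M ⊗[R] A` is a right `A`-comodule structure on `M`:
coassociativity and counitality. -/
def IsComodule {M : Type*} [AddCommGroup M] [Module R M]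
    (ρ : M →ₗ[R] M ⊗[R] A) : Prop :=
  ((TensorProduct.assoc R M A A).toLinearMap ∘ₗ ρ.rTensor A ∘ₗ ρ
      = (LinearMap.lTensor M (Coalgebra.comul (R := R) (A := A))) ∘ₗ ρ)
  ∧ ((TensorProduct.rid R M).toLinearMap
      ∘ₗ (LinearMap.lTensor M (Coalgebra.counit (R := R) (A := A))) ∘ₗ ρ = LinearMap.id)

/-- The invariants `M^A = {m : M | ρ m = m ⊗ 1}` of a comodule. -/
def comodInvariants {M : Type*} [AddCommGroup M] [Module R M]
    (ρ : M →ₗ[R] M ⊗[R] A) : Set M :=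
  {m : M | ρ m = m ⊗ₜ[R] (1 : A)}

/-- `α : A → B` is a total integral for the comodule algebra `(B, ρB)`:
a unitary morphism of `A`-comodules. -/
def IsTotalIntegral {B : Type*} [CommRing B] [Algebra R B]
    (ρB : B →ₐ[R] B ⊗[R] A) (α : A →ₗ[R] B) : Prop :=
  α 1 = 1 ∧ ρB.toLinearMap ∘ₗ α
    = (α.rTensor A) ∘ₗ (Coalgebra.comul (R := R) (A := A))

variable (B : Type*) [CommRing B] [Algebra R B]
variable (M : Type*) [AddCommGroup M] [Module R M] [Module B M] [IsScalarTower R B M]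

/-- Scalar multiplication by `b : B` on `M`, as an `R`-linear map. -/
def bsmul (b : B) : M →ₗ[R] M where
  toFun m := b • m
  map_add' := smul_add b
  map_smul' r m := smul_comm b r m

/-- The action of `B ⊗[R] A` on `M ⊗[R] A` (`B` acting on the first factor, `A` by
multiplication on the second). -/
noncomputable def tensorAction : (B ⊗[R] A) →ₗ[R] (M ⊗[R] A) →ₗ[R] (M ⊗[R] A) :=
  TensorProduct.lift <| LinearMap.mk₂ R
    (fun b a => TensorProduct.map (bsmul R B M b) (LinearMap.mulLeft R a))
    (fun b₁ b₂ a => by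
      have h : bsmul R B M (b₁ + b₂) = bsmul R B M b₁ + bsmul R B M b₂ :=
        LinearMap.ext fun m => add_smul b₁ b₂ m
      simp only [h, TensorProduct.map_add_left])
    (fun r b a => by
      have h : bsmul R B M (r • b) = r • bsmul R B M b :=
        LinearMap.ext fun m => smul_assoc r b m
      simp only [h, TensorProduct.map_smul_left])
    (fun b a₁ a₂ => by
      have h : LinearMap.mulLeft R (a₁ + a₂)
          = LinearMap.mulLeft R a₁ + LinearMap.mulLeft R a₂ :=
        LinearMap.ext fun x => add_mul a₁ a₂ x
      simp only [h, TensorProduct.map_add_right])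
    (fun r b a => by
      have h : LinearMap.mulLeft R (r • a) = r • LinearMap.mulLeft R a :=
        LinearMap.ext fun x => smul_mul_assoc r a x
      simp only [h, TensorProduct.map_smul_right])

/-- `(M, ρM)` is a `(B,A)`-module over the comodule algebra `(B, ρB)`: a `B`-module and
a right `A`-comodule whose coaction is `B`-linear, i.e. `ρM (b • m) = ρB b • ρM m`. -/
def IsBAModule (ρB : B →ₐ[R] B ⊗[R] A) (ρM : M →ₗ[R] M ⊗[R] A) : Prop :=
  IsComodule R A ρM ∧
    ∀ (b : B) (m : M), ρM (b • m) = tensorAction R A B M (ρB b) (ρM m)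

/-- The action map `M ⊗[R] B →ₗ[R] M`, `m ⊗ b ↦ b • m`. -/
noncomputable def smulMB : M ⊗[R] B →ₗ[R] M :=
  TensorProduct.lift <| LinearMap.mk₂ R (fun m b => b • m)
    (fun m₁ m₂ b => smul_add b m₁ m₂)
    (fun r m b => smul_comm b r m)
    (fun m b₁ b₂ => add_smul b₁ b₂ m)
    (fun r m b => smul_assoc r b m)

/-- The Reynolds operator `pr_M : M → M`, `m ↦ Σ α (S m₍₁₎) • m₍₀₎`: the composite of
`ρ_M : M → M ⊗ A`, then `id_M ⊗ (α ∘ S) : M ⊗ A → M ⊗ B`, then the `B`-action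
`M ⊗ B → M`. -/
noncomputable def reynolds (α : A →ₗ[R] B) (ρM : M →ₗ[R] M ⊗[R] A) : M →ₗ[R] M :=
  smulMB R B M ∘ₗ (LinearMap.lTensor M (α ∘ₗ HopfAlgebra.antipode (R := R))) ∘ₗ ρM

end ComodDefs

/-- The invariants `C = B^A` of a comodule algebra, as a subalgebra of `B`. -/
def invariantsSubalgebra (R A B : Type*) [CommRing R] [CommRing A] [HopfAlgebra R A]
    [CommRing B] [Algebra R B] (ρB : B →ₐ[R] B ⊗[R] A) : Subalgebra R B where
  carrier := comodInvariants R A ρB.toLinearMap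
  mul_mem' := fun {a b} ha hb => by
    simp only [comodInvariants, Set.mem_setOf_eq, AlgHom.toLinearMap_apply] at *
    rw [map_mul, ha, hb, Algebra.TensorProduct.tmul_mul_tmul, one_mul]
  one_mem' := by
    simp only [comodInvariants, Set.mem_setOf_eq, AlgHom.toLinearMap_apply, map_one,
      Algebra.TensorProduct.one_def]
  add_mem' := fun {a b} ha hb => by
    simp only [comodInvariants, Set.mem_setOf_eq] at *
    rw [map_add, ha, hb, TensorProduct.add_tmul]
  zero_mem' := by
    simp only [comodInvariants, Set.mem_setOf_eq, map_zero, TensorProduct.zero_tmul]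
  algebraMap_mem' := fun r => by
    simp only [comodInvariants, Set.mem_setOf_eq, AlgHom.toLinearMap_apply,
      AlgHom.commutes, Algebra.TensorProduct.algebraMap_apply]

universe u

/-!
A total integral `α` yields the Reynolds operator `m ↦ Σ α(S m₍₁₎) m₍₀₎`, a natural projection of
each `(B, A)`-module onto its invariants (it lands there because `Σ (1 ⊗ a₁) δ(S a₂) = S a ⊗ 1`),
so invariants of a quotient lift.

Conversely, `Hom(A, B)` with the coaction `φ ↦ (a ↦ Σ ρ_B(φ a₁) (1 ⊗ S a₂))` is a `(B, A)`-module
whose invariants are exactly the comodule maps `A → B`. Evaluation at `1` is a morphism onto `B`,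
split by the counit, and an invariant lift of `1 ∈ B` along it is a total integral.
-/

open WithConv Coalgebra HopfAlgebra
open Algebra.TensorProduct (includeLeft includeRight)

section Convolution

theorem includeLeft_comp_convMul_includeRight_comp {R A T C : Type*} [CommSemiring R]
    [Semiring A] [Algebra R A] [Semiring T] [Algebra R T] [AddCommMonoid C] [Module R C]
    [Coalgebra R C] (φ : C →ₗ[R] T) (g : C →ₗ[R] A) :
    toConv ((includeLeft : T →ₐ[R] T ⊗[R] A).toLinearMap ∘ₗ φ) *
      toConv ((includeRight : A →ₐ[R] T ⊗[R] A).toLinearMap ∘ₗ g) =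
      toConv (TensorProduct.map φ g ∘ₗ comul) := by
  rw [LinearMap.convMul_def, ← LinearMap.comp_assoc]
  congr 2
  ext x y
  simp

theorem includeLeft_convMul_includeRight (R A : Type*) [CommSemiring R] [Semiring A]
    [Bialgebra R A] :
    toConv (includeLeft : A →ₐ[R] A ⊗[R] A).toLinearMap *
      toConv (includeRight : A →ₐ[R] A ⊗[R] A).toLinearMap = toConv comul := by
  simpa using includeLeft_comp_convMul_includeRight_comp (R := R) (T := A) (A := A) .id .id

variable {R A T : Type*} [CommSemiring R] [Semiring A] [HopfAlgebra R A] [Semiring T] [Algebra R T]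

theorem algHom_convMul_comp_antipode (g : A →ₐ[R] T) :
    toConv g.toLinearMap * toConv (g.toLinearMap ∘ₗ antipode R) = 1 := by
  have h := LinearMap.algHom_comp_convMul_distrib g (toConv .id) (toConv (antipode R))
  rw [LinearMap.id_mul_antipode] at h
  refine (WithConv.ext h).symm.trans ?_
  ext a
  simp

theorem comp_antipode_convMul_algHom (g : A →ₐ[R] T) :
    toConv (g.toLinearMap ∘ₗ antipode R) * toConv g.toLinearMap = 1 := by
  have h := LinearMap.algHom_comp_convMul_distrib g (toConv (antipode R)) (toConv .id)
  rw [LinearMap.antipode_mul_id] at h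
  refine (WithConv.ext h).symm.trans ?_
  ext a
  simp

theorem comul_comp_antipode :
    toConv (comul ∘ₗ antipode R : A →ₗ[R] A ⊗[R] A) =
      toConv ((includeRight : A →ₐ[R] A ⊗[R] A).toLinearMap ∘ₗ antipode R) *
        toConv ((includeLeft : A →ₐ[R] A ⊗[R] A).toLinearMap ∘ₗ antipode R) := by
  refine (left_inv_eq_right_inv ?_ (LinearMap.comul_right_inv (R := R) (C := A))).symm
  rw [← includeLeft_convMul_includeRight, mul_assoc,
    ← mul_assoc _ (toConv (includeLeft : A →ₐ[R] A ⊗[R] A).toLinearMap),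
    comp_antipode_convMul_algHom, one_mul, comp_antipode_convMul_algHom]

theorem includeRight_convMul_comul_comp_antipode :
    toConv (includeRight : A →ₐ[R] A ⊗[R] A).toLinearMap * toConv (comul ∘ₗ antipode R) =
      toConv ((includeLeft : A →ₐ[R] A ⊗[R] A).toLinearMap ∘ₗ antipode R) := by
  rw [comul_comp_antipode, ← mul_assoc, algHom_convMul_comp_antipode, one_mul]

end Convolution

section SMul

variable {R B M V : Type*} [CommRing R] [CommRing B] [Algebra R B]
  [AddCommGroup M] [Module R M] [Module B M] [IsScalarTower R B M] [AddCommMonoid V] [Module R V]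

@[simp]
theorem smulMB_tmul (m : M) (b : B) : smulMB R B M (m ⊗ₜ b) = b • m := rfl

/-- The map `M ⊗ (V ⊗ V) → M ⊗ V`, `m ⊗ (v ⊗ w) ↦ α v • m ⊗ w`, which for `V = A` and a
total integral `α` expresses the coaction on values of the Reynolds operator. -/
noncomputable def integralSMul (α : V →ₗ[R] B) : M ⊗[R] (V ⊗[R] V) →ₗ[R] M ⊗[R] V :=
  (smulMB R B M ∘ₗ α.lTensor M).rTensor V ∘ₗ (TensorProduct.assoc R M V V).symm.toLinearMap

@[simp]
theorem integralSMul_tmul (α : V →ₗ[R] B) (m : M) (v w : V) :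
    integralSMul α (m ⊗ₜ (v ⊗ₜ w)) = (α v • m) ⊗ₜ[R] w := rfl

end SMul

section Modules

variable {R A B M N : Type*} [CommRing R] [CommRing A] [HopfAlgebra R A] [CommRing B] [Algebra R B]
  [AddCommGroup M] [Module R M] [Module B M] [IsScalarTower R B M]
  [AddCommGroup N] [Module R N] [Module B N] [IsScalarTower R B N]

@[simp]
theorem tensorAction_tmul_tmul (b : B) (a : A) (m : M) (x : A) :
    tensorAction R A B M (b ⊗ₜ a) (m ⊗ₜ x) = (b • m) ⊗ₜ (a * x) := rfl

theorem tensorAction_self (s t : B ⊗[R] A) : tensorAction R A B B s t = s * t := by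
  suffices tensorAction R A B B = LinearMap.mul R (B ⊗[R] A) by rw [this, LinearMap.mul_apply']
  ext b a b' a'
  simp

theorem isBAModule_self {ρB : B →ₐ[R] B ⊗[R] A} (hB : IsComodule R A ρB.toLinearMap) :
    IsBAModule R A B B ρB ρB.toLinearMap :=
  ⟨hB, fun b c => by simp [tensorAction_self]⟩

theorem tensorAction_rTensor_tmul (α : A →ₗ[R] B) (s : A ⊗[R] A) (m : M) (c : A) :
    tensorAction R A B M (α.rTensor A s) (m ⊗ₜ c) = integralSMul α (m ⊗ₜ ((1 ⊗ₜ c) * s)) := by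
  induction s with
  | zero => simp
  | add s t hs ht => simp only [map_add, mul_add, tmul_add, LinearMap.add_apply, hs, ht]
  | tmul a a' => simp [mul_comm]

namespace IsTotalIntegral

variable {ρB : B →ₐ[R] B ⊗[R] A} {α : A →ₗ[R] B}

theorem coaction_comp_smulMB (hα : IsTotalIntegral R A ρB α) {ρM : M →ₗ[R] M ⊗[R] A}
    (hM : IsBAModule R A B M ρB ρM) :
    ρM ∘ₗ smulMB R B M ∘ₗ (α ∘ₗ antipode R).lTensor M =
      integralSMul α ∘ₗ
        (LinearMap.mul' R (A ⊗[R] A) ∘ₗ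
          TensorProduct.map (includeRight : A →ₐ[R] A ⊗[R] A).toLinearMap
            (comul ∘ₗ antipode R)).lTensor M ∘ₗ
        (TensorProduct.assoc R M A A).toLinearMap ∘ₗ ρM.rTensor A := by
  refine TensorProduct.ext' fun m a => ?_
  have hαa : ρB (α (antipode R a)) = α.rTensor A (comul (antipode R a)) :=
    LinearMap.congr_fun hα.2 _
  simp only [LinearMap.comp_apply, LinearMap.lTensor_tmul, LinearMap.rTensor_tmul, smulMB_tmul,
    hM.2, hαa, LinearEquiv.coe_coe]
  induction ρM m with
  | zero => simp
  | add x y hx hy => simp only [map_add, add_tmul, hx, hy]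
  | tmul m' c => simp [tensorAction_rTensor_tmul]

theorem reynolds_mem_comodInvariants (hα : IsTotalIntegral R A ρB α) {ρM : M →ₗ[R] M ⊗[R] A}
    (hM : IsBAModule R A B M ρB ρM) (m : M) :
    reynolds R A B M α ρM m ∈ comodInvariants R A ρM := by
  let κ : A ⊗[R] A →ₗ[R] A ⊗[R] A :=
    LinearMap.mul' R (A ⊗[R] A) ∘ₗ
      TensorProduct.map (includeRight : A →ₐ[R] A ⊗[R] A).toLinearMap (comul ∘ₗ antipode R)
  have hκ : κ ∘ₗ comul = (includeLeft : A →ₐ[R] A ⊗[R] A).toLinearMap ∘ₗ antipode R :=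
    congrArg ofConv includeRight_convMul_comul_comp_antipode
  have hcoassoc : TensorProduct.assoc R M A A (ρM.rTensor A (ρM m)) = comul.lTensor M (ρM m) :=
    LinearMap.congr_fun hM.1.1 m
  calc ρM (reynolds R A B M α ρM m)
    _ = integralSMul α (κ.lTensor M (TensorProduct.assoc R M A A (ρM.rTensor A (ρM m)))) :=
      LinearMap.congr_fun (hα.coaction_comp_smulMB hM) (ρM m)
    _ = integralSMul α (((includeLeft : A →ₐ[R] A ⊗[R] A).toLinearMap ∘ₗ antipode R).lTensor M
          (ρM m)) := by
      rw [hcoassoc, ← LinearMap.lTensor_comp_apply, hκ]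
    _ = reynolds R A B M α ρM m ⊗ₜ 1 := by
      simp only [reynolds, LinearMap.comp_apply]
      induction ρM m with
      | zero => simp
      | add x y hx hy => simp only [map_add, add_tmul, hx, hy]
      | tmul m' c => simp

theorem reynolds_of_mem_comodInvariants (hα : IsTotalIntegral R A ρB α) {ρM : M →ₗ[R] M ⊗[R] A}
    {m : M} (hm : m ∈ comodInvariants R A ρM) : reynolds R A B M α ρM m = m := by
  have hm' : ρM m = m ⊗ₜ 1 := hm
  simp [reynolds, hm', hα.1]

end IsTotalIntegral

theorem map_reynolds (α : A →ₗ[R] B) {ρM : M →ₗ[R] M ⊗[R] A} {ρN : N →ₗ[R] N ⊗[R] A}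
    {f : M →ₗ[B] N}
    (hf : ρN ∘ₗ f.restrictScalars R = (f.restrictScalars R).rTensor A ∘ₗ ρM) (m : M) :
    f (reynolds R A B M α ρM m) = reynolds R A B N α ρN (f m) := by
  have hfm : ρN (f m) = (f.restrictScalars R).rTensor A (ρM m) := LinearMap.congr_fun hf m
  simp only [reynolds, LinearMap.comp_apply, hfm]
  induction ρM m with
  | zero => simp
  | add x y hx hy => simp only [map_add, hx, hy]
  | tmul m' a => simp

theorem IsTotalIntegral.exists_mem_comodInvariants_eq {ρB : B →ₐ[R] B ⊗[R] A} {α : A →ₗ[R] B}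
    (hα : IsTotalIntegral R A ρB α) {ρM : M →ₗ[R] M ⊗[R] A} (hM : IsBAModule R A B M ρB ρM)
    {ρN : N →ₗ[R] N ⊗[R] A} {f : M →ₗ[B] N}
    (hf : ρN ∘ₗ f.restrictScalars R = (f.restrictScalars R).rTensor A ∘ₗ ρM)
    (hsurj : Function.Surjective f) {n : N} (hn : n ∈ comodInvariants R A ρN) :
    ∃ m ∈ comodInvariants R A ρM, f m = n := by
  obtain ⟨m, rfl⟩ := hsurj n
  refine ⟨reynolds R A B M α ρM m, hα.reynolds_mem_comodInvariants hM m, ?_⟩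
  rw [map_reynolds α hf, hα.reynolds_of_mem_comodInvariants hn]

end Modules

section ConvCoaction

variable {R A B : Type*} [CommSemiring R] [Semiring A] [HopfAlgebra R A]
  [Semiring B] [Algebra R B]

/-- The coaction of `A` on `Hom(A, B)`, `φ ↦ (a ↦ Σ ρ_B(φ a₁) (1 ⊗ S a₂))`, with values in
`Hom(A, B ⊗ A)`, which is `Hom(A, B) ⊗ A` when `A` is finite projective. -/
noncomputable def convCoaction (ρB : B →ₐ[R] B ⊗[R] A) :
    (A →ₗ[R] B) →ₗ[R] (A →ₗ[R] B ⊗[R] A) where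
  toFun φ := (toConv (ρB.toLinearMap ∘ₗ φ) *
    toConv ((includeRight : A →ₐ[R] B ⊗[R] A).toLinearMap ∘ₗ antipode R)).ofConv
  map_add' φ ψ := by simp only [LinearMap.comp_add, toConv_add, add_mul, ofConv_add]
  map_smul' r φ := by
    simp only [LinearMap.comp_smul, toConv_smul, smul_mul_assoc, ofConv_smul, RingHom.id_apply]

theorem toConv_convCoaction (ρB : B →ₐ[R] B ⊗[R] A) (φ : A →ₗ[R] B) :
    toConv (convCoaction ρB φ) = toConv (ρB.toLinearMap ∘ₗ φ) *
      toConv ((includeRight : A →ₐ[R] B ⊗[R] A).toLinearMap ∘ₗ antipode R) := rfl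

theorem convCoaction_eq_includeLeft_comp_iff {ρB : B →ₐ[R] B ⊗[R] A} {φ : A →ₗ[R] B} :
    convCoaction ρB φ = (includeLeft : B →ₐ[R] B ⊗[R] A).toLinearMap ∘ₗ φ ↔
      ρB.toLinearMap ∘ₗ φ = φ.rTensor A ∘ₗ comul := by
  let i₂ : A →ₐ[R] B ⊗[R] A := includeRight
  let i₂Unit : (WithConv (A →ₗ[R] B ⊗[R] A))ˣ :=
    ⟨toConv i₂.toLinearMap, toConv (i₂.toLinearMap ∘ₗ antipode R),
      algHom_convMul_comp_antipode i₂, comp_antipode_convMul_algHom i₂⟩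
  have hmap : toConv ((includeLeft : B →ₐ[R] B ⊗[R] A).toLinearMap ∘ₗ φ) * i₂Unit =
      toConv (φ.rTensor A ∘ₗ comul) :=
    includeLeft_comp_convMul_includeRight_comp φ .id
  rw [← toConv_injective.eq_iff, toConv_convCoaction, ← toConv_injective.eq_iff (a := _ ∘ₗ φ),
    ← hmap]
  exact i₂Unit.mul_inv_eq_iff_eq_mul

theorem convCoaction_smul (ρB : B →ₐ[R] B ⊗[R] A) (b : B) (φ : A →ₗ[R] B) (a : A) :
    convCoaction ρB (b • φ) a = ρB b * convCoaction ρB φ a := by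
  have hcomp : ρB.toLinearMap ∘ₗ (b • φ) = ρB b • (ρB.toLinearMap ∘ₗ φ) := by
    ext; simp
  have h : toConv (convCoaction ρB (b • φ)) = ρB b • toConv (convCoaction ρB φ) := by
    rw [toConv_convCoaction, toConv_convCoaction, hcomp, toConv_smul, smul_mul_assoc]
  exact LinearMap.congr_fun (congrArg ofConv h) a

theorem convCoaction_one_apply (ρB : B →ₐ[R] B ⊗[R] A) (φ : A →ₗ[R] B) :
    convCoaction ρB φ 1 = ρB (φ 1) := by
  change (toConv (convCoaction ρB φ)) 1 = _
  rw [toConv_convCoaction, LinearMap.convMul_apply, Bialgebra.comul_one,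
    Algebra.TensorProduct.one_def, TensorProduct.map_tmul]
  simp [← Algebra.TensorProduct.one_def]

theorem toConv_algHom_comp_convCoaction {T : Type*} [Semiring T] [Algebra R T]
    (g : B ⊗[R] A →ₐ[R] T) (ρB : B →ₐ[R] B ⊗[R] A) (φ : A →ₗ[R] B) :
    toConv (g.toLinearMap ∘ₗ convCoaction ρB φ) = toConv (g.toLinearMap ∘ₗ ρB.toLinearMap ∘ₗ φ) *
      toConv ((g.comp includeRight).toLinearMap ∘ₗ antipode R) :=
  congrArg toConv (LinearMap.algHom_comp_convMul_distrib g (toConv (ρB.toLinearMap ∘ₗ φ)) _)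

theorem toConv_assoc_flip_comp_convCoaction (ρB : B →ₐ[R] B ⊗[R] A) (φ : A →ₗ[R] B) (x : A) :
    toConv ((TensorProduct.assoc R B A A).toLinearMap ∘ₗ (TensorProduct.mk R _ A).flip x ∘ₗ
        convCoaction ρB φ) =
      toConv ((TensorProduct.assoc R B A A).toLinearMap ∘ₗ (TensorProduct.mk R _ A).flip x ∘ₗ
        ρB.toLinearMap ∘ₗ φ) *
      toConv ((includeRight.comp includeLeft : A →ₐ[R] B ⊗[R] (A ⊗[R] A)).toLinearMap ∘ₗ
        antipode R) := by
  let W : B ⊗[R] A →ₐ[R] B ⊗[R] (A ⊗[R] A) := Algebra.TensorProduct.map (.id R B) includeLeft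
  let c : B ⊗[R] (A ⊗[R] A) := 1 ⊗ₜ (1 ⊗ₜ x)
  have hW (u : A →ₗ[R] B ⊗[R] A) : toConv ((TensorProduct.assoc R B A A).toLinearMap ∘ₗ
      (TensorProduct.mk R _ A).flip x ∘ₗ u) = c • toConv (W.toLinearMap ∘ₗ u) := by
    have : (TensorProduct.assoc R B A A).toLinearMap ∘ₗ (TensorProduct.mk R _ A).flip x =
        c • W.toLinearMap := by
      ext b a
      simp [c, W]
    rw [← LinearMap.comp_assoc, this]
    rfl
  have hWi : W.comp includeRight = includeRight.comp includeLeft := by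
    ext a
    simp [W]
  rw [hW, hW, toConv_algHom_comp_convCoaction, hWi, smul_mul_assoc]

end ConvCoaction

section Contraction

variable {R P Q X Y : Type*} [CommSemiring R] [AddCommMonoid P] [Module R P] [AddCommMonoid Q]
  [Module R Q] [AddCommMonoid X] [Module R X] [AddCommMonoid Y] [Module R Y]

theorem rTensorHomToHomRTensor_lTensor (g : X →ₗ[R] Y) (t : (P →ₗ[R] Q) ⊗[R] X) :
    rTensorHomToHomRTensor (.id R) P Q Y (g.lTensor _ t) =
      g.lTensor Q ∘ₗ rTensorHomToHomRTensor (.id R) P Q X t := by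
  induction t with
  | zero => simp
  | add s t hs ht => simp only [map_add, hs, ht, LinearMap.comp_add]
  | tmul f x =>
    ext p
    simp

theorem rTensorHomToHomRTensor_assoc_tmul (s : (P →ₗ[R] Q) ⊗[R] X) (y : Y) :
    rTensorHomToHomRTensor (.id R) P Q (X ⊗[R] Y) (TensorProduct.assoc R _ X Y (s ⊗ₜ y)) =
      (TensorProduct.assoc R Q X Y).toLinearMap ∘ₗ (TensorProduct.mk R _ Y).flip y ∘ₗ
        rTensorHomToHomRTensor (.id R) P Q X s := by
  induction s with
  | zero => simp
  | add s t hs ht => simp only [map_add, add_tmul, hs, ht, LinearMap.comp_add]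
  | tmul f x =>
    ext p
    simp

theorem rid_comp_rTensorHomToHomRTensor (t : (P →ₗ[R] Q) ⊗[R] R) :
    (TensorProduct.rid R Q).toLinearMap ∘ₗ rTensorHomToHomRTensor (.id R) P Q R t =
      TensorProduct.rid R (P →ₗ[R] Q) t := by
  induction t with
  | zero => simp
  | add s t hs ht => simp only [map_add, hs, ht, LinearMap.comp_add]
  | tmul f r =>
    ext p
    simp

theorem rTensor_applyₗ (p : P) (t : (P →ₗ[R] Q) ⊗[R] X) :
    (LinearMap.applyₗ p).rTensor X t = rTensorHomToHomRTensor (.id R) P Q X t p := by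
  induction t with
  | zero => simp
  | add s t hs ht => simp only [map_add, hs, ht, LinearMap.add_apply]
  | tmul f x => simp

variable (R P Q X) in
theorem rTensorHomToHomRTensor_injective [Module.Finite R P] [Module.Projective R P] :
    Function.Injective (rTensorHomToHomRTensor (.id R) P Q X) := by
  convert (rTensorHomEquivHomRTensor R P Q X).injective using 1
  ext t
  simp

end Contraction

theorem rTensorHomToHomRTensor_tensorAction {R P A B : Type*} [CommRing R] [AddCommMonoid P]
    [Module R P] [CommRing A] [HopfAlgebra R A] [CommRing B] [Algebra R B] (s : B ⊗[R] A)
    (t : (P →ₗ[R] B) ⊗[R] A) (p : P) :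
    rTensorHomToHomRTensor (.id R) P B A (tensorAction R A B _ s t) p =
      s * rTensorHomToHomRTensor (.id R) P B A t p := by
  induction t with
  | zero => simp
  | add t t' ht ht' => simp only [map_add, LinearMap.add_apply, mul_add, ht, ht']
  | tmul f x =>
    induction s with
    | zero => simp
    | add s s' hs hs' => simp only [map_add, LinearMap.add_apply, add_mul, hs, hs']
    | tmul b a => simp

section HomCoaction

variable {R A B : Type*} [CommRing R] [CommRing A] [HopfAlgebra R A] [CommRing B] [Algebra R B]

theorem lTensor_counit_comp_convCoaction {ρB : B →ₐ[R] B ⊗[R] A}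
    (hB : IsComodule R A ρB.toLinearMap) (φ : A →ₗ[R] B) :
    (TensorProduct.rid R B).toLinearMap ∘ₗ counit.lTensor B ∘ₗ convCoaction ρB φ = φ := by
  let E : B ⊗[R] A →ₐ[R] B :=
    (Algebra.TensorProduct.rid R R B).toAlgHom.comp
      (Algebra.TensorProduct.map (.id R B) (Bialgebra.counitAlgHom R A))
  have hEρ : E.toLinearMap ∘ₗ ρB.toLinearMap = .id := hB.2
  have hEi : toConv ((E.comp includeRight).toLinearMap ∘ₗ antipode R) = 1 := by
    ext a
    simp [E, Algebra.algebraMap_eq_smul_one]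
  apply toConv_injective
  calc toConv (E.toLinearMap ∘ₗ convCoaction ρB φ)
    _ = toConv (E.toLinearMap ∘ₗ ρB.toLinearMap ∘ₗ φ) *
          toConv ((E.comp includeRight).toLinearMap ∘ₗ antipode R) :=
      toConv_algHom_comp_convCoaction E ρB φ
    _ = toConv φ := by
      rw [hEi, mul_one, ← LinearMap.comp_assoc, hEρ, LinearMap.id_comp]

theorem toConv_lTensor_comul_comp_convCoaction {ρB : B →ₐ[R] B ⊗[R] A}
    (hB : IsComodule R A ρB.toLinearMap) (φ : A →ₗ[R] B) :
    toConv (comul.lTensor B ∘ₗ convCoaction ρB φ) =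
      toConv ((TensorProduct.assoc R B A A).toLinearMap ∘ₗ ρB.toLinearMap.rTensor A ∘ₗ
        convCoaction ρB φ) *
      toConv ((includeRight.comp includeLeft : A →ₐ[R] B ⊗[R] (A ⊗[R] A)).toLinearMap ∘ₗ
        antipode R) := by
  let K : B ⊗[R] A →ₐ[R] B ⊗[R] (A ⊗[R] A) :=
    (Algebra.TensorProduct.assoc R R R B A A).toAlgHom.comp
      (Algebra.TensorProduct.map ρB (.id R A))
  let L : B ⊗[R] A →ₐ[R] B ⊗[R] (A ⊗[R] A) :=
    Algebra.TensorProduct.map (.id R B) (Bialgebra.comulAlgHom R A)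
  let j : A ⊗[R] A →ₐ[R] B ⊗[R] (A ⊗[R] A) := includeRight
  have hρ : L.toLinearMap ∘ₗ ρB.toLinearMap = K.toLinearMap ∘ₗ ρB.toLinearMap := hB.1.symm
  have hK : K.comp includeRight = j.comp includeRight := by
    ext a
    simp [K, j, Algebra.TensorProduct.one_def]
  have hL : (L.comp includeRight).toLinearMap = j.toLinearMap ∘ₗ comul := by
    ext a
    simp [L, j]
  have hj : toConv (j.toLinearMap ∘ₗ comul ∘ₗ antipode R) =
      toConv ((j.comp includeRight).toLinearMap ∘ₗ antipode R) *
        toConv ((j.comp includeLeft).toLinearMap ∘ₗ antipode R) := by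
    rw [← ofConv_toConv (comul ∘ₗ _), comul_comp_antipode, LinearMap.algHom_comp_convMul_distrib]
    rfl
  calc toConv (L.toLinearMap ∘ₗ convCoaction ρB φ)
    _ = toConv ((L.toLinearMap ∘ₗ ρB.toLinearMap) ∘ₗ φ) *
          toConv ((L.comp includeRight).toLinearMap ∘ₗ antipode R) :=
      toConv_algHom_comp_convCoaction L ρB φ
    _ = toConv (K.toLinearMap ∘ₗ ρB.toLinearMap ∘ₗ φ) *
          toConv ((K.comp includeRight).toLinearMap ∘ₗ antipode R) *
          toConv ((j.comp includeLeft).toLinearMap ∘ₗ antipode R) := by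
      rw [hL, hρ, hK, LinearMap.comp_assoc, LinearMap.comp_assoc, hj, mul_assoc]
    _ = toConv (K.toLinearMap ∘ₗ convCoaction ρB φ) *
          toConv ((j.comp includeLeft).toLinearMap ∘ₗ antipode R) := by
      rw [toConv_algHom_comp_convCoaction K]

variable [Module.Finite R A] [Module.Projective R A]

/-- The coaction of `A` on `Hom(A, B)` given by `convCoaction` under the identification of
`Hom(A, B) ⊗ A` with `Hom(A, B ⊗ A)`. -/
noncomputable def homCoaction (ρB : B →ₐ[R] B ⊗[R] A) :
    (A →ₗ[R] B) →ₗ[R] (A →ₗ[R] B) ⊗[R] A :=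
  (rTensorHomEquivHomRTensor R A B A).symm.toLinearMap ∘ₗ convCoaction ρB

theorem rTensorHomToHomRTensor_homCoaction (ρB : B →ₐ[R] B ⊗[R] A) (φ : A →ₗ[R] B) :
    rTensorHomToHomRTensor (.id R) A B A (homCoaction ρB φ) = convCoaction ρB φ := by
  rw [← rTensorHomEquivHomRTensor_apply]
  exact LinearEquiv.apply_symm_apply ..

-- Distributivity in `WithConv (A →ₗ[R] B ⊗[R] (A ⊗[R] A))` needs deeper instance search.
set_option maxSynthPendingDepth 4 in
theorem toConv_rTensorHomToHomRTensor_assoc_rTensor_homCoaction (ρB : B →ₐ[R] B ⊗[R] A)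
    (t : (A →ₗ[R] B) ⊗[R] A) :
    toConv (rTensorHomToHomRTensor (.id R) A B (A ⊗[R] A)
        (TensorProduct.assoc R _ A A ((homCoaction ρB).rTensor A t))) =
      toConv ((TensorProduct.assoc R B A A).toLinearMap ∘ₗ ρB.toLinearMap.rTensor A ∘ₗ
        rTensorHomToHomRTensor (.id R) A B A t) *
      toConv ((includeRight.comp includeLeft : A →ₐ[R] B ⊗[R] (A ⊗[R] A)).toLinearMap ∘ₗ
        antipode R) := by
  induction t with
  | zero => simp only [map_zero, toConv_zero, LinearMap.comp_zero, zero_mul]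
  | add t t' ht ht' => simp only [map_add, toConv_add, LinearMap.comp_add, ht, ht', add_mul]
  | tmul φ x =>
    rw [LinearMap.rTensor_tmul, rTensorHomToHomRTensor_assoc_tmul,
      rTensorHomToHomRTensor_homCoaction, toConv_assoc_flip_comp_convCoaction]
    congr 3

theorem isComodule_homCoaction {ρB : B →ₐ[R] B ⊗[R] A} (hB : IsComodule R A ρB.toLinearMap) :
    IsComodule R A (homCoaction ρB) := by
  constructor
  · ext1 φ
    apply rTensorHomToHomRTensor_injective R A B
    apply toConv_injective
    simp only [LinearMap.comp_apply, LinearEquiv.coe_coe, rTensorHomToHomRTensor_lTensor,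
      toConv_rTensorHomToHomRTensor_assoc_rTensor_homCoaction,
      rTensorHomToHomRTensor_homCoaction, toConv_lTensor_comul_comp_convCoaction hB]
  · ext1 φ
    simp only [LinearMap.comp_apply, LinearEquiv.coe_coe, LinearMap.id_apply,
      ← rid_comp_rTensorHomToHomRTensor, rTensorHomToHomRTensor_lTensor,
      rTensorHomToHomRTensor_homCoaction, lTensor_counit_comp_convCoaction hB]

theorem isBAModule_homCoaction {ρB : B →ₐ[R] B ⊗[R] A} (hB : IsComodule R A ρB.toLinearMap) :
    IsBAModule R A B (A →ₗ[R] B) ρB (homCoaction ρB) := by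
  refine ⟨isComodule_homCoaction hB, fun b φ => rTensorHomToHomRTensor_injective R A B A ?_⟩
  ext1 a
  rw [rTensorHomToHomRTensor_tensorAction, rTensorHomToHomRTensor_homCoaction,
    rTensorHomToHomRTensor_homCoaction, convCoaction_smul]

theorem mem_comodInvariants_homCoaction_iff {ρB : B →ₐ[R] B ⊗[R] A} {φ : A →ₗ[R] B} :
    φ ∈ comodInvariants R A (homCoaction ρB) ↔
      ρB.toLinearMap ∘ₗ φ = φ.rTensor A ∘ₗ comul := by
  have hφ : rTensorHomToHomRTensor (.id R) A B A (φ ⊗ₜ 1) =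
      (includeLeft : B →ₐ[R] B ⊗[R] A).toLinearMap ∘ₗ φ := by
    ext a
    simp
  rw [← convCoaction_eq_includeLeft_comp_iff, ← hφ, ← rTensorHomToHomRTensor_homCoaction]
  exact (rTensorHomToHomRTensor_injective R A B A).eq_iff.symm

theorem coaction_comp_eval_one (ρB : B →ₐ[R] B ⊗[R] A) :
    ρB.toLinearMap ∘ₗ (LinearMap.applyₗ' B (1 : A)).restrictScalars R =
      ((LinearMap.applyₗ' B (1 : A)).restrictScalars R).rTensor A ∘ₗ homCoaction (R := R) ρB := by
  ext1 φ
  have h := rTensor_applyₗ (1 : A) (homCoaction ρB φ)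
  rw [rTensorHomToHomRTensor_homCoaction, convCoaction_one_apply] at h
  exact h.symm

end HomCoaction

variable (R A B : Type*) [CommSemiring R] [Semiring A] [Bialgebra R A] [Semiring B]
  [Algebra R B] in
theorem applyₗ_one_surjective :
    Function.Surjective (LinearMap.applyₗ' B (1 : A) : (A →ₗ[R] B) →ₗ[B] B) := fun b =>
  ⟨counit.smulRight b, by simp⟩

universe v w

theorem total_integral_iff_invariants_exact_general
    {R : Type v} {A : Type w} {B : Type (max u w)} [CommRing R] [CommRing A] [HopfAlgebra R A]
    [CommRing B] [Algebra R B]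
    (ρB : B →ₐ[R] B ⊗[R] A) (hB : IsComodule R A ρB.toLinearMap)
    [Module.Finite R A] [Module.Projective R A] :
    (∃ α : A →ₗ[R] B, IsTotalIntegral R A ρB α) ↔
    (∀ (M N : Type (max u w)) [AddCommGroup M] [Module R M] [Module B M] [IsScalarTower R B M]
      [AddCommGroup N] [Module R N] [Module B N] [IsScalarTower R B N]
      (ρM : M →ₗ[R] M ⊗[R] A), IsBAModule R A B M ρB ρM →
      ∀ (ρN : N →ₗ[R] N ⊗[R] A), IsBAModule R A B N ρB ρN →
      ∀ (f : M →ₗ[B] N),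
        ρN ∘ₗ (f.restrictScalars R) = ((f.restrictScalars R).rTensor A) ∘ₗ ρM →
        Function.Surjective f →
        ∀ n ∈ comodInvariants R A ρN, ∃ m ∈ comodInvariants R A ρM, f m = n) := by
  constructor
  · rintro ⟨α, hα⟩ M N _ _ _ _ _ _ _ _ ρM hM ρN - f hf hsurj n hn
    exact hα.exists_mem_comodInvariants_eq hM hf hsurj hn
  · intro hexact
    have h_one : (1 : B) ∈ comodInvariants R A ρB.toLinearMap :=
      (invariantsSubalgebra R A B ρB).one_mem
    obtain ⟨α, hα, hα_one⟩ := hexact (A →ₗ[R] B) B (homCoaction ρB) (isBAModule_homCoaction hB)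
      ρB.toLinearMap (isBAModule_self hB) (LinearMap.applyₗ' B (1 : A))
      (coaction_comp_eval_one ρB) (applyₗ_one_surjective R A B) 1 h_one
    exact ⟨α, hα_one, mem_comodInvariants_homCoaction_iff.mp hα⟩

/-- Suppose `C = B^A` is noetherian, `B` is finite and flat as a `C`-module, and `A` is
finite projective over `R`.  Then the action is tame (a total integral exists) if and
only if the functor of invariants on `(B,A)`-modules is exact, i.e. preserves
surjections. -/
theorem total_integral_iff_invariants_exact
    {R A B : Type u} [CommRing R] [CommRing A] [HopfAlgebra R A]
    [CommRing B] [Algebra R B]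
    (ρB : B →ₐ[R] B ⊗[R] A) (hB : IsComodule R A ρB.toLinearMap)
    [IsNoetherianRing (invariantsSubalgebra R A B ρB)]
    [Module.Finite (invariantsSubalgebra R A B ρB) B]
    [Module.Flat (invariantsSubalgebra R A B ρB) B]
    [Module.Finite R A] [Module.Projective R A] :
    (∃ α : A →ₗ[R] B, IsTotalIntegral R A ρB α) ↔
    (∀ (M N : Type u) [AddCommGroup M] [Module R M] [Module B M] [IsScalarTower R B M]
      [AddCommGroup N] [Module R N] [Module B N] [IsScalarTower R B N]
      (ρM : M →ₗ[R] M ⊗[R] A), IsBAModule R A B M ρB ρM →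
      ∀ (ρN : N →ₗ[R] N ⊗[R] A), IsBAModule R A B N ρB ρN →
      ∀ (f : M →ₗ[B] N),
        ρN ∘ₗ (f.restrictScalars R) = ((f.restrictScalars R).rTensor A) ∘ₗ ρM →
        Function.Surjective f →
        ∀ n ∈ comodInvariants R A ρN, ∃ m ∈ comodInvariants R A ρM, f m = n) :=
  total_integral_iff_invariants_exact_general.{u} ρB hB
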